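/- arXiv:1412.4367 — 4 statements merged into one kernel-verified Lean document; each statement's English description precedes it below -/
import Mathlib

section
/- Let L be a finite-dimensional simple Leibniz algebra over a field F of characteristic zero, and suppose L = G ⊕ I as vector spaces, where G is a subalgebra of L that is a simple Lie algebra under the restricted bracket and I is the ideal generated by squares. Then every derivation d of L can be written as d = R_a + α + Δ, where a ∈ G, α : L → L is a linear map with α(G) = 0 and α(I) ⊆ I, Δ : L → L is a linear map with Δ(I) = 0 and Δ(G) ⊆ I, and α([x,y]) = [α(x),y] for all x, y ∈ L. Moreover, either α = 0 or α(I) = I. -/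
/-!
The ideal `I` generated by the squares is right-annihilating, `[L, I] = 0`, because
`[x, [y, y]] = 0` by the Leibniz identity, and every derivation maps `I` into itself. Hence `d`
followed by the projection `L → G` along `I` restricts to a derivation of the simple Lie algebra
`G`. In characteristic zero `G` has nondegenerate Killing form (Cartan's criterion), so this
derivation is inner, say `x ↦ [x, a]` (`exists_eq_bracket_of_derivation`).

The derivation `e = d - R_a` therefore maps all of `L` into `I`. Take for `Δ` and `α` the
compositions of `e` with the projections onto `G` and `I`. As `[x, e y] = 0`, the Leibniz rule for
`e` gives `α [x, y] = [α x, y]`. Thus `α(I)` is an ideal contained in `I`, and simplicity of `L`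
forces it to be `0` or `I`.
-/

/-- `J` is a (two-sided) ideal of the Leibniz algebra `(L, br)`. -/
def IsLeibnizIdeal {F L : Type*} [Field F] [AddCommGroup L] [Module F L]
    (br : L →ₗ[F] L →ₗ[F] L) (J : Submodule F L) : Prop :=
  (∀ a ∈ J, ∀ y : L, br a y ∈ J) ∧ (∀ a ∈ J, ∀ y : L, br y a ∈ J)

/-- The ideal of the Leibniz algebra `(L, br)` generated by the squares `[x,x]`. -/
def squaresIdeal {F L : Type*} [Field F] [AddCommGroup L] [Module F L]
    (br : L →ₗ[F] L →ₗ[F] L) : Submodule F L :=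
  sInf {J | (∀ x : L, br x x ∈ J) ∧ IsLeibnizIdeal br J}

/-- The Leibniz algebra `(L, br)` is simple: its only ideals are `0`, `I` and `L`,
and `[L,L] ≠ I`. -/
def IsSimpleLeibniz {F L : Type*} [Field F] [AddCommGroup L] [Module F L]
    (br : L →ₗ[F] L →ₗ[F] L) : Prop :=
  (∀ J : Submodule F L, IsLeibnizIdeal br J → J = ⊥ ∨ J = squaresIdeal br ∨ J = ⊤) ∧
  Submodule.span F {z : L | ∃ x y : L, z = br x y} ≠ squaresIdeal br

/-- Every derivation of a finite-dimensional simple Lie algebra in characteristic zero is inner,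
for a Lie algebra presented by a skew-symmetric bilinear map `b` that satisfies the right Leibniz
identity. -/
theorem exists_eq_bracket_of_derivation {F V : Type*} [Field F] [CharZero F] [AddCommGroup V]
    [Module F V] [FiniteDimensional F V] (b : V →ₗ[F] V →ₗ[F] V)
    (hanti : ∀ x y, b x y = - b y x)
    (hLeib : ∀ x y z, b x (b y z) = b (b x y) z - b (b x z) y)
    (hsimple : ∀ J : Submodule F V, (∀ a ∈ J, ∀ g, b a g ∈ J) → J = ⊥ ∨ J = ⊤)
    (hne : ∃ x y, b x y ≠ 0) (D : V →ₗ[F] V)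
    (hD : ∀ x y, D (b x y) = b (D x) y + b x (D y)) :
    ∃ a, ∀ x, D x = b x a := by
  let _ : LieRing V :=
    { bracket := fun x y => b x y
      add_lie := fun x y z => by simp
      lie_add := fun x y z => by simp
      lie_self := fun x => by
        have h : (2 : F) • b x x = 0 := by
          rw [two_smul]
          nth_rewrite 2 [hanti x x]
          exact add_neg_cancel _
        exact (smul_eq_zero.mp h).resolve_left two_ne_zero
      leibniz_lie := fun x y z => by
        change b x (b y z) = b (b x y) z + b y (b x z)
        rw [hLeib, hanti y (b x z), sub_eq_add_neg] }
  let _ : LieAlgebra F V :=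
    { lie_smul := fun t x y => (b x).map_smul t y }
  have : LieAlgebra.IsSimple F V :=
    { eq_bot_or_eq_top := fun J => by
        have h := hsimple J.toSubmodule fun a ha g => by
          rw [hanti]
          exact J.toSubmodule.neg_mem (J.lie_mem (x := g) ha)
        simpa using h
      non_abelian := fun h => by
        obtain ⟨x, y, hxy⟩ := hne
        exact hxy (h.trivial x y) }
  let D' : LieDerivation F V V :=
    { D with
      leibniz' := fun x y => by
        change D (b x y) = b x (D y) - b y (D x)
        rw [hD, hanti (D x) y]
        abel }
  obtain ⟨a, ha⟩ := LieDerivation.IsKilling.exists_eq_ad D'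
  refine ⟨-a, fun x => ?_⟩
  have h : D' x = b a x := by
    rw [← ha, LieDerivation.ad_apply_apply]
    rfl
  rw [map_neg, ← hanti]
  exact h

section Squares

variable {F L : Type*} [Field F] [AddCommGroup L] [Module F L] (br : L →ₗ[F] L →ₗ[F] L)

theorem sq_mem_squaresIdeal (x : L) : br x x ∈ squaresIdeal br := by
  simp only [squaresIdeal, Submodule.mem_sInf]
  exact fun J hJ => hJ.1 x

theorem squaresIdeal_isLeibnizIdeal : IsLeibnizIdeal br (squaresIdeal br) := by
  simp only [IsLeibnizIdeal, squaresIdeal, Submodule.mem_sInf]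
  exact ⟨fun a ha y J hJ => hJ.2.1 a (ha J hJ) y, fun a ha y J hJ => hJ.2.2 a (ha J hJ) y⟩

theorem squaresIdeal_le {J : Submodule F L} (hsq : ∀ x, br x x ∈ J) (hJ : IsLeibnizIdeal br J) :
    squaresIdeal br ≤ J :=
  sInf_le ⟨hsq, hJ⟩

/-- The right annihilator of `L` is an ideal that contains all squares, hence `[L, I] = 0`. -/
theorem bracket_squaresIdeal_eq_zero
    (hLeib : ∀ x y z : L, br x (br y z) = br (br x y) z - br (br x z) y)
    {v : L} (hv : v ∈ squaresIdeal br) (x : L) : br x v = 0 := by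
  have h : squaresIdeal br ≤ LinearMap.ker br.flip := by
    refine squaresIdeal_le br (fun x => ?_) ⟨fun a ha y => ?_, fun a ha y => ?_⟩
    · ext z
      simp [hLeib]
    all_goals
      have ha' : ∀ z, br z a = 0 := fun z => LinearMap.congr_fun (LinearMap.mem_ker.mp ha) z
      ext z
      simp [hLeib, ha']
  exact LinearMap.congr_fun (LinearMap.mem_ker.mp (h hv)) x

theorem derivation_mem_squaresIdeal (d : L →ₗ[F] L)
    (hd : ∀ x y : L, d (br x y) = br (d x) y + br x (d y))
    {v : L} (hv : v ∈ squaresIdeal br) : d v ∈ squaresIdeal br := by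
  have hI := squaresIdeal_isLeibnizIdeal br
  have h : squaresIdeal br ≤ squaresIdeal br ⊓ (squaresIdeal br).comap d := by
    refine squaresIdeal_le br (fun x => ⟨sq_mem_squaresIdeal br x, ?_⟩)
      ⟨fun a ha y => ⟨hI.1 a ha.1 y, ?_⟩, fun a ha y => ⟨hI.2 a ha.1 y, ?_⟩⟩
    · -- Polarization: `[d x, x] + [x, d x]` is a combination of squares.
      have e : d (br x x) = br (x + d x) (x + d x) - br x x - br (d x) (d x) := by
        simp only [hd, map_add, LinearMap.add_apply]
        abel
      change d (br x x) ∈ squaresIdeal br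
      rw [e]
      exact sub_mem (sub_mem (sq_mem_squaresIdeal br _) (sq_mem_squaresIdeal br _))
        (sq_mem_squaresIdeal br _)
    · change d (br a y) ∈ squaresIdeal br
      rw [hd]
      exact add_mem (hI.1 _ ha.2 _) (hI.1 _ ha.1 _)
    · change d (br y a) ∈ squaresIdeal br
      rw [hd]
      exact add_mem (hI.2 _ ha.1 _) (hI.2 _ ha.2 _)
  exact (h hv).2

end Squares

/-- Any derivation of a finite-dimensional simple Leibniz algebra
`L = G ⊕ I` over a field of characteristic zero decomposes as `R_a + α + Δ`. -/
theorem derivation_of_simple_leibniz_decomposition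
    {F L : Type*} [Field F] [CharZero F] [AddCommGroup L] [Module F L]
    [FiniteDimensional F L]
    (br : L →ₗ[F] L →ₗ[F] L)
    (hLeib : ∀ x y z : L, br x (br y z) = br (br x y) z - br (br x z) y)
    (hSimple : IsSimpleLeibniz br)
    (G : Submodule F L)
    (hGclosed : ∀ x ∈ G, ∀ y ∈ G, br x y ∈ G)
    (hGanti : ∀ x ∈ G, ∀ y ∈ G, br x y = - br y x)
    (hGsimpleLie :
      (∀ J : Submodule F L, J ≤ G → (∀ a ∈ J, ∀ g ∈ G, br a g ∈ J) → J = ⊥ ∨ J = G) ∧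
      ∃ x ∈ G, ∃ y ∈ G, br x y ≠ 0)
    (hdirect : G ⊓ squaresIdeal br = ⊥ ∧ G ⊔ squaresIdeal br = ⊤)
    (d : L →ₗ[F] L)
    (hd : ∀ x y : L, d (br x y) = br (d x) y + br x (d y)) :
    ∃ a ∈ G, ∃ α Δ : L →ₗ[F] L,
      d = br.flip a + α + Δ ∧
      (∀ g ∈ G, α g = 0) ∧
      (∀ v ∈ squaresIdeal br, α v ∈ squaresIdeal br) ∧
      (∀ v ∈ squaresIdeal br, Δ v = 0) ∧
      (∀ g ∈ G, Δ g ∈ squaresIdeal br) ∧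
      (∀ x y : L, α (br x y) = br (α x) y) ∧
      (α = 0 ∨ Submodule.map α (squaresIdeal br) = squaresIdeal br) := by
  have hI := squaresIdeal_isLeibnizIdeal br
  have hann : ∀ v ∈ squaresIdeal br, ∀ x, br x v = 0 :=
    fun v hv x => bracket_squaresIdeal_eq_zero br hLeib hv x
  have hdI : ∀ v ∈ squaresIdeal br, d v ∈ squaresIdeal br :=
    fun v hv => derivation_mem_squaresIdeal br d hd hv
  have hc : IsCompl G (squaresIdeal br) :=
    ⟨disjoint_iff.mpr hdirect.1, codisjoint_iff.mpr hdirect.2⟩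
  set π : L →ₗ[F] L := G.projection (squaresIdeal br) hc with hπ
  have hπmem : ∀ x, π x ∈ G := fun x => Submodule.projection_apply_mem hc x
  have hπG : ∀ x ∈ G, π x = x := fun x hx => Submodule.projection_apply_of_mem_left hc hx
  have hπI : ∀ x ∈ squaresIdeal br, π x = 0 :=
    fun x hx => Submodule.projection_apply_of_mem_right hc hx
  have hπsub : ∀ x, x - π x ∈ squaresIdeal br := fun x => by
    rw [← Submodule.projection_apply_eq_zero_iff hc, ← hπ, map_sub, hπG _ (hπmem x), sub_self]
  have hbrI : ∀ x y, br x (π y) = br x y := fun x y => by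
    have h := hann _ (hπsub y) x
    rw [map_sub, sub_eq_zero] at h
    exact h.symm
  -- `π` is a homomorphism onto the subalgebra `G`.
  have hπbr : ∀ x y, π (br x y) = br (π x) (π y) := fun x y => by
    have h : br x y = br (π x) (π y) + br (x - π x) y := by
      rw [hbrI, map_sub, LinearMap.sub_apply]
      abel
    rw [h, map_add, hπG _ (hGclosed _ (hπmem x) _ (hπmem y)), hπI _ (hI.1 _ (hπsub x) y),
      add_zero]
  obtain ⟨a, ha⟩ : ∃ a : G, ∀ g : G, π (d g) = br g a := by
    let b : G →ₗ[F] G →ₗ[F] G := LinearMap.mk₂ F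
      (fun x y => ⟨br x y, hGclosed x x.2 y y.2⟩)
      (fun x y z => Subtype.ext (by simp)) (fun c x y => Subtype.ext (by simp))
      (fun x y z => Subtype.ext (by simp)) (fun c x y => Subtype.ext (by simp))
    have hb : ∀ x y : G, ((b x y : G) : L) = br x y := fun x y => rfl
    let D : G →ₗ[F] G := ((π ∘ₗ d).domRestrict G).codRestrict G fun x => hπmem _
    have hDa : ∀ x : G, ((D x : G) : L) = π (d x) := fun x => rfl
    obtain ⟨a, ha⟩ := exists_eq_bracket_of_derivation b
      (fun x y => Subtype.ext (hGanti x x.2 y y.2))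
      (fun x y z => Subtype.ext (hLeib x y z))
      (fun J hJ => by
        rcases hGsimpleLie.1 (J.map G.subtype) (Submodule.map_subtype_le G J) (by
          rintro _ ⟨u, hu, rfl⟩ g hg
          exact ⟨_, hJ u hu ⟨g, hg⟩, rfl⟩) with h | h
        · refine Or.inl (Submodule.map_injective_of_injective G.injective_subtype ?_)
          rw [h, Submodule.map_bot]
        · refine Or.inr (Submodule.map_injective_of_injective G.injective_subtype ?_)
          rw [h, Submodule.map_subtype_top])
      (by
        obtain ⟨x, hx, y, hy, hxy⟩ := hGsimpleLie.2
        exact ⟨⟨x, hx⟩, ⟨y, hy⟩, fun h => hxy (congrArg Subtype.val h)⟩)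
      D
      (fun x y => Subtype.ext (by
        rw [Submodule.coe_add, hb, hb, hDa, hDa, hDa, hb, hd, map_add, hπbr, hπbr,
          hπG x x.2, hπG y y.2]))
    exact ⟨a, fun g => congrArg Subtype.val (ha g)⟩
  set e : L →ₗ[F] L := d - br.flip (a : L) with he
  have hea : ∀ x, e x = d x - br x a := fun x => rfl
  have heder : ∀ x y, e (br x y) = br (e x) y + br x (e y) := fun x y => by
    simp only [hea, hd, map_sub, LinearMap.sub_apply, hLeib x y a]
    abel
  have heI : ∀ v ∈ squaresIdeal br, e v ∈ squaresIdeal br :=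
    fun v hv => sub_mem (hdI v hv) (hI.1 v hv _)
  have heG : ∀ g ∈ G, e g ∈ squaresIdeal br := fun g hg => by
    rw [hea, ← ha ⟨g, hg⟩]
    exact hπsub _
  have heL : ∀ x, e x ∈ squaresIdeal br := fun x => by
    rw [← add_sub_cancel (π x) x, map_add]
    exact add_mem (heG _ (hπmem x)) (heI _ (hπsub x))
  set α : L →ₗ[F] L := e ∘ₗ (LinearMap.id - π) with hα
  have hαa : ∀ x, α x = e (x - π x) := fun x => rfl
  have hαI : ∀ v ∈ squaresIdeal br, α v ∈ squaresIdeal br := fun v _ => heL _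
  have hαG : ∀ g ∈ G, α g = 0 := fun g hg => by rw [hαa, hπG g hg, sub_self, map_zero]
  have hαbr : ∀ x y, α (br x y) = br (α x) y := fun x y => by
    have h : br x y - π (br x y) = br (x - π x) y := by
      rw [hπbr, hbrI, map_sub, LinearMap.sub_apply]
    rw [hαa, h, heder, hann _ (heL y), add_zero, hαa]
  refine ⟨a, a.2, α, e ∘ₗ π, ?_, hαG, hαI, fun v hv => ?_, fun g _ => heL _, hαbr, ?_⟩
  · ext x
    change d x = br x a + e (x - π x) + e (π x)
    rw [add_assoc, ← map_add, sub_add_cancel, hea]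
    abel
  · change e (π v) = 0
    rw [hπI v hv, map_zero]
  · have hle : Submodule.map α (squaresIdeal br) ≤ squaresIdeal br := by
      rintro _ ⟨v, hv, rfl⟩
      exact hαI v hv
    have hideal : IsLeibnizIdeal br (Submodule.map α (squaresIdeal br)) := by
      refine ⟨?_, fun u hu y => ?_⟩
      · rintro _ ⟨v, hv, rfl⟩ y
        exact ⟨br v y, hI.1 v hv y, hαbr v y⟩
      · rw [hann u (hle hu)]
        exact zero_mem _
    rcases hSimple.1 _ hideal with h | h | h
    · left
      ext x
      have hx : α (x - π x) ∈ Submodule.map α (squaresIdeal br) := ⟨_, hπsub x, rfl⟩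
      rw [h, Submodule.mem_bot, map_sub, hαG _ (hπmem x), sub_zero] at hx
      exact hx
    · exact Or.inr h
    · exact Or.inr (le_antisymm hle (h ▸ le_top))
end

section
/- Let L be a finite-dimensional Leibniz algebra over a field of characteristic zero that decomposes as a direct sum of ideals L = L_1 ⊕ … ⊕ L_s, where each L_i is a simple Leibniz algebra. Then every derivation d of L satisfies d(L_i) ⊆ L_i for each i; consequently d = d_1 + … + d_s, where each d_i vanishes on L_j for j ≠ i, maps L_i into L_i, and restricts to a derivation of the Leibniz algebra L_i. -/
/-!
Each simple summand `S` is perfect: the span `[S,S]` of the brackets of `S` is an ideal of `S`, it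
differs from the squares ideal `I_S` by definition, and `[S,S] = 0` would force `I_S = 0 = [S,S]`;
so `[S,S] = S` (`span_bracket_eq_of_simple`). Since `S` is moreover an ideal of `L`, the Leibniz
rule gives `d S = d [S,S] ⊆ [d S, S] + [S, d S] ⊆ S` for every derivation `d`. The components of
`d` are its compositions with the projections onto the summands.
-/

/-- The squares ideal of the subalgebra `S` of the Leibniz algebra `(L, br)`:
the smallest subspace of `S` containing all squares `[x,x]`, `x ∈ S`, and closed under
left and right multiplication by elements of `S`. -/
def subSquaresIdeal {F L : Type*} [Field F] [AddCommGroup L] [Module F L]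
    (br : L →ₗ[F] L →ₗ[F] L) (S : Submodule F L) : Submodule F L :=
  sInf {J | J ≤ S ∧ (∀ x ∈ S, br x x ∈ J) ∧
    (∀ a ∈ J, ∀ x ∈ S, br a x ∈ J ∧ br x a ∈ J)}

/-- The subalgebra `S` of `(L, br)` is a simple Leibniz algebra: its only ideals are
`0`, its squares ideal `I_S`, and `S` itself, and `[S,S] ≠ I_S`. -/
def IsSimpleLeibnizSubalgebra {F L : Type*} [Field F] [AddCommGroup L] [Module F L]
    (br : L →ₗ[F] L →ₗ[F] L) (S : Submodule F L) : Prop :=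
  (∀ J : Submodule F L,
      (J ≤ S ∧ ∀ a ∈ J, ∀ x ∈ S, br a x ∈ J ∧ br x a ∈ J) →
      J = ⊥ ∨ J = subSquaresIdeal br S ∨ J = S) ∧
  Submodule.span F {z : L | ∃ x ∈ S, ∃ y ∈ S, z = br x y} ≠ subSquaresIdeal br S

/-- A simple Leibniz algebra is perfect. -/
theorem span_bracket_eq_of_simple
    {F L : Type*} [Field F] [AddCommGroup L] [Module F L]
    (br : L →ₗ[F] L →ₗ[F] L) (S : Submodule F L)
    (hS : ∀ a ∈ S, ∀ y ∈ S, br a y ∈ S)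
    (h : IsSimpleLeibnizSubalgebra br S) :
    Submodule.span F {z : L | ∃ x ∈ S, ∃ y ∈ S, z = br x y} = S := by
  have hle : Submodule.span F {z : L | ∃ x ∈ S, ∃ y ∈ S, z = br x y} ≤ S := by
    rw [Submodule.span_le]
    rintro z ⟨x, hx, y, hy, rfl⟩
    exact hS x hx y hy
  rcases h.1 _ ⟨hle, fun a ha x hx =>
    ⟨Submodule.subset_span ⟨a, hle ha, x, hx, rfl⟩,
      Submodule.subset_span ⟨x, hx, a, hle ha, rfl⟩⟩⟩ with h0 | hI | h1
  · -- If all brackets of `S` vanish, then `⊥` is an ideal containing all squares.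
    refine absurd ?_ h.2
    rw [h0, eq_comm, eq_bot_iff]
    refine sInf_le ⟨bot_le, fun x hx => ?_, fun a ha x _ => ?_⟩
    · rw [← h0]
      exact Submodule.subset_span ⟨x, hx, x, hx, rfl⟩
    · rw [Submodule.mem_bot] at ha
      simp [ha]
  · exact absurd hI h.2
  · exact h1

/-- A derivation preserves every perfect ideal. -/
theorem derivation_mem_of_perfect
    {F L : Type*} [Field F] [AddCommGroup L] [Module F L]
    (br : L →ₗ[F] L →ₗ[F] L) (S : Submodule F L)
    (hS : (∀ a ∈ S, ∀ y : L, br a y ∈ S) ∧ (∀ a ∈ S, ∀ y : L, br y a ∈ S))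
    (hperf : Submodule.span F {z : L | ∃ x ∈ S, ∃ y ∈ S, z = br x y} = S)
    (d : L →ₗ[F] L) (hd : ∀ x y : L, d (br x y) = br (d x) y + br x (d y))
    {x : L} (hx : x ∈ S) : d x ∈ S := by
  have hle : Submodule.span F {z : L | ∃ x ∈ S, ∃ y ∈ S, z = br x y} ≤ S.comap d := by
    rw [Submodule.span_le]
    rintro z ⟨x, hx, y, hy, rfl⟩
    rw [SetLike.mem_coe, Submodule.mem_comap, hd]
    exact S.add_mem (hS.2 y hy _) (hS.1 x hx _)
  rw [hperf] at hle
  exact hle hx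

/-- An internal direct sum of submodules has projections onto its summands. -/
theorem exists_projections
    {F L ι : Type*} [Field F] [AddCommGroup L] [Module F L]
    (M : ι → Submodule F L) (hIndep : iSupIndep M) (hSup : ⨆ i, M i = ⊤) :
    ∃ p : ι → (L →ₗ[F] L), ∀ i, (∀ x ∈ M i, p i x = x) ∧
      ∀ j, j ≠ i → ∀ x ∈ M j, p i x = 0 := by
  have hc : ∀ i, IsCompl (M i) (⨆ j, ⨆ _ : j ≠ i, M j) := fun i =>
    ⟨hIndep i, codisjoint_iff.2 (by
      rw [eq_top_iff, ← hSup]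
      refine iSup_le fun j => ?_
      by_cases hj : j = i
      · exact hj ▸ le_sup_left
      · exact le_sup_of_le_right (le_iSup₂_of_le j hj le_rfl))⟩
  refine ⟨fun i => Submodule.projection _ _ (hc i), fun i => ⟨fun x hx => ?_, fun j hj x hx => ?_⟩⟩
  · exact Submodule.projection_apply_of_mem_left (hc i) hx
  · exact (Submodule.projection_apply_eq_zero_iff (hc i)).2
      ((le_iSup₂_of_le (f := fun j (_ : j ≠ i) => M j) j hj le_rfl) hx)

/-- If a finite-dimensional Leibniz algebra over a field of
characteristic zero is a direct sum of ideals each of which is a simple Leibniz algebra,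
then every derivation preserves each summand and decomposes accordingly. -/
theorem derivation_of_direct_sum_of_simple_leibniz
    {F L : Type*} [Field F] [CharZero F] [AddCommGroup L] [Module F L]
    [FiniteDimensional F L]
    (br : L →ₗ[F] L →ₗ[F] L)
    (hLeib : ∀ x y z : L, br x (br y z) = br (br x y) z - br (br x z) y)
    (s : ℕ) (Lfam : Fin s → Submodule F L)
    (hIdeal : ∀ i, (∀ a ∈ Lfam i, ∀ y : L, br a y ∈ Lfam i) ∧
                   (∀ a ∈ Lfam i, ∀ y : L, br y a ∈ Lfam i))
    (hIndep : iSupIndep Lfam) (hSup : ⨆ i, Lfam i = ⊤)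
    (hSimple : ∀ i, IsSimpleLeibnizSubalgebra br (Lfam i))
    (d : L →ₗ[F] L)
    (hd : ∀ x y : L, d (br x y) = br (d x) y + br x (d y)) :
    (∀ i, ∀ x ∈ Lfam i, d x ∈ Lfam i) ∧
    ∃ dfam : Fin s → (L →ₗ[F] L),
      d = ∑ i, dfam i ∧
      ∀ i, (∀ j, j ≠ i → ∀ x ∈ Lfam j, dfam i x = 0) ∧
           (∀ x ∈ Lfam i, dfam i x ∈ Lfam i) ∧
           (∀ x ∈ Lfam i, ∀ y ∈ Lfam i,
             dfam i (br x y) = br (dfam i x) y + br x (dfam i y)) := by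
  have hmem : ∀ i, ∀ x ∈ Lfam i, d x ∈ Lfam i := fun i x hx =>
    derivation_mem_of_perfect br (Lfam i) (hIdeal i)
      (span_bracket_eq_of_simple br (Lfam i) (fun a ha y _ => (hIdeal i).1 a ha y) (hSimple i))
      d hd hx
  obtain ⟨p, hp⟩ := exists_projections Lfam hIndep hSup
  refine ⟨hmem, fun i => d ∘ₗ p i, ?_, fun i => ⟨?_, ?_, ?_⟩⟩
  · -- Two linear maps agreeing on every summand agree on `⨆ i, Lfam i = ⊤`.
    have hle : ⨆ i, Lfam i ≤ LinearMap.eqLocus d (∑ i, d ∘ₗ p i) := by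
      refine iSup_le fun j x hx => ?_
      rw [LinearMap.mem_eqLocus, LinearMap.sum_apply, Finset.sum_eq_single j]
      · rw [LinearMap.comp_apply, (hp j).1 x hx]
      · intro i _ hij
        rw [LinearMap.comp_apply, (hp i).2 j hij.symm x hx, map_zero]
      · exact fun h => absurd (Finset.mem_univ j) h
    ext x
    exact hle (hSup ▸ Submodule.mem_top)
  · intro j hj x hx
    rw [LinearMap.comp_apply, (hp i).2 j hj x hx, map_zero]
  · intro x hx
    rw [LinearMap.comp_apply, (hp i).1 x hx]
    exact hmem i x hx
  · intro x hx y hy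
    simp only [LinearMap.comp_apply]
    rw [(hp i).1 x hx, (hp i).1 y hy, (hp i).1 _ ((hIdeal i).1 x hx y), hd]
end

section
/- Let L be a Leibniz algebra over a field and let I be the ideal of L generated by squares. If α is a derivation of L with α(L) ⊆ I, then α([x,y]) = [α(x),y] for all x, y ∈ L, and the image α(I) is an ideal of L. -/
/-- The right annihilator `{a | ∀ x, [x, a] = 0}` is an ideal containing every square,
hence contains the ideal generated by the squares. -/
theorem br_squaresIdeal_eq_zero {F L : Type*} [Field F] [AddCommGroup L] [Module F L]
    (br : L →ₗ[F] L →ₗ[F] L)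
    (hLeib : ∀ x y z : L, br x (br y z) = br (br x y) z - br (br x z) y)
    {a : L} (ha : a ∈ squaresIdeal br) (x : L) : br x a = 0 := by
  have mem_ker : ∀ b : L, b ∈ LinearMap.ker br.flip ↔ ∀ x : L, br x b = 0 := fun b => by
    rw [LinearMap.mem_ker, LinearMap.ext_iff]
    rfl
  have hle : squaresIdeal br ≤ LinearMap.ker br.flip := by
    refine sInf_le ⟨fun y => ?_, fun b hb y => ?_, fun b hb y => ?_⟩
    · exact (mem_ker _).2 fun x => by rw [hLeib, sub_self]
    · rw [mem_ker] at hb ⊢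
      intro x
      rw [hLeib, hb, hb, map_zero, LinearMap.zero_apply, sub_zero]
    · rw [(mem_ker b).1 hb y]
      exact Submodule.zero_mem _
  exact (mem_ker a).1 (hle ha) x

theorem br_mem_squaresIdeal {F L : Type*} [Field F] [AddCommGroup L] [Module F L]
    (br : L →ₗ[F] L →ₗ[F] L) {a : L} (ha : a ∈ squaresIdeal br) (y : L) :
    br a y ∈ squaresIdeal br :=
  Submodule.mem_sInf.2 fun J hJ => hJ.2.1 a (Submodule.mem_sInf.1 ha J hJ) y

/-- If `α` is a derivation of a Leibniz algebra `L` with `α(L) ⊆ I`,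
then `α([x,y]) = [α(x), y]` for all `x, y`, and `α(I)` is an ideal of `L`. -/
theorem derivation_into_squares_ideal
    {F L : Type*} [Field F] [AddCommGroup L] [Module F L]
    (br : L →ₗ[F] L →ₗ[F] L)
    (hLeib : ∀ x y z : L, br x (br y z) = br (br x y) z - br (br x z) y)
    (α : L →ₗ[F] L)
    (hα : ∀ x y : L, α (br x y) = br (α x) y + br x (α y))
    (hrange : ∀ x : L, α x ∈ squaresIdeal br) :
    (∀ x y : L, α (br x y) = br (α x) y) ∧
    IsLeibnizIdeal br (Submodule.map α (squaresIdeal br)) := by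
  have hzero : ∀ x y : L, br x (α y) = 0 := fun x y =>
    br_squaresIdeal_eq_zero br hLeib (hrange y) x
  have hfst : ∀ x y : L, α (br x y) = br (α x) y := fun x y => by
    rw [hα, hzero, add_zero]
  refine ⟨hfst, ?_, ?_⟩
  · rintro _ ⟨a, ha, rfl⟩ y
    exact ⟨br a y, br_mem_squaresIdeal br ha y, hfst a y⟩
  · rintro _ ⟨a, -, rfl⟩ y
    rw [hzero]
    exact Submodule.zero_mem _
end

section
/- Let L be a finite-dimensional Leibniz algebra over a field of characteristic zero and let R be its solvable radical. Then there exists a subalgebra S of L such that the bracket restricted to S is antisymmetric, S is a semisimple Lie algebra under the restricted bracket, and L = S ⊕ R as vector spaces. -/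
/-- The derived series of a subspace `A` of the Leibniz algebra `(L, br)`:
`A⁰ = A`, `Aⁿ⁺¹ = span [Aⁿ, Aⁿ]`. -/
def leibnizDerivedSeries {F L : Type*} [Field F] [AddCommGroup L] [Module F L]
    (br : L →ₗ[F] L →ₗ[F] L) (A : Submodule F L) : ℕ → Submodule F L
  | 0 => A
  | n + 1 => Submodule.span F
      {z : L | ∃ x ∈ leibnizDerivedSeries br A n, ∃ y ∈ leibnizDerivedSeries br A n, z = br x y}

/-- A subspace `A` of the Leibniz algebra `(L, br)` is solvable if its derived series
terminates at `0`. -/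
def IsSolvableSub {F L : Type*} [Field F] [AddCommGroup L] [Module F L]
    (br : L →ₗ[F] L →ₗ[F] L) (A : Submodule F L) : Prop :=
  ∃ s : ℕ, leibnizDerivedSeries br A s = ⊥

/-! ### Whitehead's first lemma -/

open LieAlgebra LieModule in
/-- A Lie algebra with nondegenerate Killing form is perfect, stated dually: a linear map that
vanishes on all brackets is zero. -/
theorem killing_perfect_map_eq_zero {F G V : Type*} [Field F] [LieRing G] [LieAlgebra F G]
    [FiniteDimensional F G] [IsKilling F G] [AddCommGroup V] [Module F V]
    (f : G →ₗ[F] V) (hf : ∀ x y : G, f ⁅x, y⁆ = 0) : f = 0 := by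
  set D : LieIdeal F G := ⁅(⊤ : LieIdeal F G), (⊤ : LieIdeal F G)⁆ with hD
  have hc := LieIdeal.isCompl_killingCompl D
  have hab : IsLieAbelian D.killingCompl := by
    rw [LieSubmodule.lie_abelian_iff_lie_self_eq_bot, eq_bot_iff, ← hc.inf_eq_bot]
    exact le_inf (LieSubmodule.mono_lie le_top le_top) (LieSubmodule.lie_le_right _ _)
  have htop : D = ⊤ := by
    have h0 := IsKilling.ideal_eq_bot_of_isLieAbelian D.killingCompl
    simpa [h0] using hc.sup_eq_top
  have hle : (⊤ : Submodule F G) ≤ LinearMap.ker f := by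
    rw [← LieSubmodule.top_toSubmodule (R := F) (L := G) (M := G), ← htop, hD,
      LieSubmodule.lieIdeal_oper_eq_linear_span', Submodule.span_le]
    rintro _ ⟨x, -, y, -, rfl⟩
    exact hf x y
  ext x
  exact hle (Submodule.mem_top (x := x))

open LieAlgebra LieModule in
/-- For an irreducible module `V`, the trace form is nondegenerate on the Killing complement of
the kernel of the representation. By Cartan's criterion the radical `A` of the restricted form has
`⁅A, A⁆` acting nilpotently, so by irreducibility `⁅A, A⁆` acts as zero; hence `A` is an abelian
ideal and vanishes. The zero module also satisfies `hV` and is covered. -/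
theorem traceForm_nondeg {F G V : Type*} [Field F] [CharZero F] [LieRing G]
    [LieAlgebra F G] [FiniteDimensional F G] [IsKilling F G] [AddCommGroup V] [Module F V]
    [FiniteDimensional F V] [LieRingModule G V] [LieModule F G V]
    (hV : ∀ W : LieSubmodule F G V, W = ⊥ ∨ W = ⊤) :
    ((traceForm F G V).restrict
      ((LieModule.ker F G V).killingCompl).toSubmodule).Nondegenerate := by
  set H := (LieModule.ker F G V).killingCompl with hH
  set A : LieIdeal F G := InvariantForm.orthogonal (traceForm F G V)
    (traceForm_lieInvariant F G V) H ⊓ H with hA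
  have htf : traceForm F A V = 0 := by
    ext ⟨x, hx⟩ ⟨y, hy⟩
    exact hy.1 x hx.2
  have hnil : LieModule.IsNilpotent (derivedSeries F A 1) V :=
    isNilpotent_derivedSeries_of_traceForm_eq_zero htf
  -- `W` is the space of vectors killed by `⁅A, A⁆`. It is nonzero by Engel's theorem if `V ≠ 0`.
  let W : LieSubmodule F G V :=
    { carrier := {v | ∀ a ∈ ⁅A, A⁆, ⁅a, v⁆ = 0}
      add_mem' := fun hu hv a ha => by simp [hu a ha, hv a ha]
      zero_mem' := fun a _ => by simp
      smul_mem' := fun c v hv a ha => by simp [hv a ha]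
      lie_mem := fun {x v} hv a ha => by
        have h1 := hv _ (lie_mem_left F G ⁅A, A⁆ a x ha)
        have h2 := hv a ha
        rw [leibniz_lie, h1, h2]; simp }
  have hW : W = ⊤ := by
    rcases hV W with h | h
    · rcases subsingleton_or_nontrivial V with hs | hn
      · rw [h]; exact Subsingleton.elim _ _
      · exfalso
        have := nontrivial_max_triv_of_isNilpotent F (derivedSeries F A 1) V
        obtain ⟨⟨v, hv⟩, hv0⟩ := exists_ne (0 : maxTrivSubmodule F (derivedSeries F A 1) V)
        apply hv0
        have hvW : v ∈ W := by
          intro a ha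
          have haA : a ∈ A := LieSubmodule.lie_le_left A A ha
          have : (⟨a, haA⟩ : A) ∈ derivedSeries F A 1 := by
            rw [LieIdeal.derivedSeries_eq_derivedSeriesOfIdeal_comap, LieIdeal.mem_comap]
            exact ha
          exact hv ⟨⟨a, haA⟩, this⟩
        rw [h] at hvW
        exact Subtype.ext (by simpa using hvW)
    · exact h
  have hAb : IsLieAbelian A := by
    rw [LieSubmodule.lie_abelian_iff_lie_self_eq_bot, eq_bot_iff,
      ← (LieIdeal.isCompl_killingCompl (LieModule.ker F G V)).inf_eq_bot]
    refine le_inf (fun a ha => ?_) ((LieSubmodule.lie_le_left A A).trans inf_le_right)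
    rw [LieModule.mem_ker]
    intro m
    have : m ∈ W := by rw [hW]; trivial
    exact this a ha
  have hA0 : A = ⊥ := IsKilling.ideal_eq_bot_of_isLieAbelian A
  refine (LinearMap.IsRefl.nondegenerate_iff_separatingRight ?_).2 ?_
  · intro x y h
    change traceForm F G V y x = 0
    rw [traceForm_comm]; exact h
  rintro ⟨y, hy⟩ h
  have : y ∈ A := ⟨fun x hx => h ⟨x, hx⟩, hy⟩
  rw [hA0] at this
  exact Subtype.ext (by simpa using this)

open LieAlgebra LieModule in
/-- Invariance of the Casimir tensor `∑ bᵢ ⊗ bⁱ ∈ H ⊗ H`, tested against an arbitrary bilinear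
map `B`. It is used with `B x y = ⁅x, ⁅y, v⁆⁆` (the Casimir operator commutes with the action) and
with `B x y = ⁅x, f y⁆` for a cocycle `f`. -/
theorem sum_dual_invariant {F G V ι : Type*} [Field F] [LieRing G]
    [LieAlgebra F G] [AddCommGroup V] [Module F V] [Fintype ι] [DecidableEq ι]
    (β : LinearMap.BilinForm F G) (hs : ∀ x y, β x y = β y x)
    (hβ : ∀ x y z : G, β ⁅x, y⁆ z = - β y ⁅x, z⁆)
    (H : LieIdeal F G) (hnd : (β.restrict H.toSubmodule).Nondegenerate)
    (b : Module.Basis ι F H.toSubmodule) (B : G →ₗ[F] G →ₗ[F] V) (g : G) :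
    ∑ i, B ⁅g, (b i : G)⁆ ((β.restrict H.toSubmodule).dualBasis hnd b i : G) +
    ∑ i, B (b i : G) ⁅g, ((β.restrict H.toSubmodule).dualBasis hnd b i : G)⁆ = 0 := by
  have hsym : (β.restrict H.toSubmodule).IsSymm := ⟨fun x y => hs _ _⟩
  set d := (β.restrict H.toSubmodule).dualBasis hnd b with hd
  have hx : ∀ h ∈ H, h = ∑ j, β h (d j) • (b j : G) := by
    intro h hh
    have h1 := b.sum_repr ⟨h, hh⟩
    have h2 : ∀ j, b.repr ⟨h, hh⟩ j = β h (d j) := by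
      intro j
      have := LinearMap.BilinForm.dualBasis_repr_apply (B := β.restrict H.toSubmodule) hnd d ⟨h, hh⟩ j
      rw [hd, LinearMap.BilinForm.dualBasis_dualBasis hnd hsym] at this
      exact this
    have h3 := congrArg (Subtype.val) h1
    simp only [h2] at h3
    exact h3.symm.trans (by simp)
  have hy : ∀ h ∈ H, h = ∑ j, β h (b j) • (d j : G) := by
    intro h hh
    have h1 := d.sum_repr ⟨h, hh⟩
    have h2 : ∀ j, d.repr ⟨h, hh⟩ j = β h (b j) := fun j =>
      LinearMap.BilinForm.dualBasis_repr_apply (B := β.restrict H.toSubmodule) hnd b ⟨h, hh⟩ j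
    have h3 := congrArg (Subtype.val) h1
    simp only [h2] at h3
    exact h3.symm.trans (by simp)
  have e1 : ∑ i, B ⁅g, (b i : G)⁆ (d i : G)
      = ∑ i, ∑ j, β ⁅g, (b i : G)⁆ (d j) • B (b j) (d i) := by
    refine Finset.sum_congr rfl fun i _ => ?_
    conv_lhs => rw [hx _ (lie_mem_right F G H g _ (b i).2)]
    simp
  have e2 : ∑ i, B (b i : G) ⁅g, (d i : G)⁆
      = ∑ i, ∑ j, β ⁅g, (d j : G)⁆ (b i) • B (b j) (d i) := by
    rw [Finset.sum_comm]
    refine Finset.sum_congr rfl fun i _ => ?_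
    conv_lhs => rw [hy _ (lie_mem_right F G H g _ (d i).2)]
    simp
  rw [e1, e2, ← Finset.sum_add_distrib]
  refine Finset.sum_eq_zero fun i _ => ?_
  rw [← Finset.sum_add_distrib]
  refine Finset.sum_eq_zero fun j _ => ?_
  rw [← add_smul, hβ, hs (b i), neg_add_cancel, zero_smul]

open LieAlgebra LieModule in
/-- Whitehead's first lemma for an irreducible module. If the action is trivial, cocycles vanish
because `G` is perfect. Otherwise the Casimir operator `C` of the trace form is invertible, and
`C (f g) = ⁅g, ∑ ⁅bᵢ, f bⁱ⁆⁆`, so `C⁻¹ (∑ ⁅bᵢ, f bⁱ⁆)` is the required primitive. -/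
theorem whitehead_irred {F G V : Type*} [Field F] [CharZero F] [LieRing G]
    [LieAlgebra F G] [FiniteDimensional F G] [IsKilling F G] [AddCommGroup V] [Module F V]
    [FiniteDimensional F V] [LieRingModule G V] [LieModule F G V]
    (hV : ∀ W : LieSubmodule F G V, W = ⊥ ∨ W = ⊤) (f : G →ₗ[F] V)
    (hf : ∀ x y : G, f ⁅x, y⁆ = ⁅x, f y⁆ - ⁅y, f x⁆) :
    ∃ v : V, ∀ x, f x = ⁅x, v⁆ := by
  classical
  by_cases hker : LieModule.ker F G V = ⊤
  · have htriv : ∀ (x : G) (v : V), ⁅x, v⁆ = 0 := by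
      intro x
      rw [← LieModule.mem_ker (R := F), hker]
      trivial
    have := killing_perfect_map_eq_zero f (fun x y => by rw [hf, htriv, htriv, sub_zero])
    exact ⟨0, fun x => by simp [this]⟩
  set H := (LieModule.ker F G V).killingCompl with hH
  have hc := LieIdeal.isCompl_killingCompl (LieModule.ker F G V)
  have hH0 : H ≠ ⊥ := by
    intro h
    apply hker
    have := hc.sup_eq_top
    rwa [← hH, h, sup_bot_eq] at this
  have hnd := traceForm_nondeg (F := F) (G := G) (V := V) hV
  rw [← hH] at hnd
  set β := traceForm F G V with hβ
  let b := Module.finBasis F H.toSubmodule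
  set d := (β.restrict H.toSubmodule).dualBasis hnd b with hd
  have hsym : (β.restrict H.toSubmodule).IsSymm := ⟨fun x y => traceForm_comm F G V _ _⟩
  have hinv : ∀ x y z : G, β ⁅x, y⁆ z = - β y ⁅x, z⁆ := fun x y z => traceForm_apply_lie_apply' F G V x y z
  let ρ := toEnd F G V
  let C : V →ₗ[F] V := ∑ i, (ρ (b i)) ∘ₗ (ρ (d i))
  have hCapp : ∀ v, C v = ∑ i, ⁅(b i : G), ⁅(d i : G), v⁆⁆ := by
    intro v; simp [C, ρ, LinearMap.sum_apply]
  have hCcomm : ∀ (g : G) v, C ⁅g, v⁆ = ⁅g, C v⁆ := by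
    intro g v
    have h := sum_dual_invariant β (traceForm_comm F G V) hinv H hnd b
      (LinearMap.mk₂ F (fun x y : G => ⁅x, ⁅y, v⁆⁆) (by simp) (by simp) (by simp) (by simp)) g
    simp only [LinearMap.mk₂_apply] at h
    rw [hCapp, hCapp, lie_sum, ← sub_eq_zero, ← neg_eq_zero, neg_sub, ← Finset.sum_sub_distrib]
    rw [← Finset.sum_add_distrib] at h
    rw [← h]
    refine Finset.sum_congr rfl fun i _ => ?_
    rw [leibniz_lie g (b i : G), leibniz_lie g (d i : G), lie_add]
    abel
  -- Each summand of `C` has trace `β (b i) (d i) = 1`, so `C ≠ 0` in characteristic zero.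
  have htr : LinearMap.trace F V C = Module.finrank F H.toSubmodule := by
    have : ∀ i, LinearMap.trace F V (ρ (b i) ∘ₗ ρ (d i)) = 1 := by
      intro i
      have := LinearMap.BilinForm.apply_dualBasis_right hnd hsym b i i
      rw [if_pos rfl] at this
      exact this
    simp [C, map_sum, this]
  have hCne : C ≠ 0 := by
    intro h0
    rw [h0, map_zero] at htr
    have : Module.finrank F H.toSubmodule = 0 := by exact_mod_cast htr.symm
    rw [Submodule.finrank_eq_zero] at this
    exact hH0 (by simpa using this)
  let K : LieSubmodule F G V :=
    { LinearMap.ker C with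
      lie_mem := fun {x v} hv => by
        change C ⁅x, v⁆ = 0
        have hv' : C v = 0 := hv
        rw [hCcomm, hv', lie_zero] }
  have hKbot : K = ⊥ := by
    rcases hV K with h | h
    · exact h
    · exfalso
      apply hCne
      ext v
      have : v ∈ K := by rw [h]; trivial
      exact this
  have hinj : Function.Injective C := by
    rw [← LinearMap.ker_eq_bot]
    have := congrArg LieSubmodule.toSubmodule hKbot
    simpa [K] using this
  obtain ⟨v, hv⟩ := LinearMap.surjective_of_injective hinj (∑ i, ⁅(b i : G), f (d i)⁆)
  refine ⟨v, fun g => hinj ?_⟩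
  rw [hCcomm, hv, lie_sum, hCapp]
  have h := sum_dual_invariant β (traceForm_comm F G V) hinv H hnd b
      (LinearMap.mk₂ F (fun x y : G => ⁅x, f y⁆) (by simp) (by simp) (by simp) (by simp)) g
  simp only [LinearMap.mk₂_apply] at h
  rw [← sub_eq_zero, ← neg_eq_zero, neg_sub, ← Finset.sum_sub_distrib]
  rw [← Finset.sum_add_distrib] at h
  rw [← h]
  refine Finset.sum_congr rfl fun i _ => ?_
  rw [leibniz_lie g (b i : G), hf, lie_sub]
  abel

open LieAlgebra LieModule in
/-- Whitehead's first lemma `H¹(G, V) = 0`, by induction on a bound `n` for the dimension of `V`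
along a proper nonzero submodule and its quotient. -/
theorem whitehead_first {F G : Type*} [Field F] [CharZero F] [LieRing G]
    [LieAlgebra F G] [FiniteDimensional F G] [IsKilling F G] (n : ℕ) :
    ∀ (V : Type*) [AddCommGroup V] [Module F V]
    [FiniteDimensional F V] [LieRingModule G V] [LieModule F G V]
    (_ : Module.finrank F V ≤ n) (f : G →ₗ[F] V)
    (_ : ∀ x y : G, f ⁅x, y⁆ = ⁅x, f y⁆ - ⁅y, f x⁆),
    ∃ v : V, ∀ x, f x = ⁅x, v⁆ := by
  induction n with
  | zero =>
    intro V _ _ _ _ _ hn f hf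
    have : Subsingleton V := Module.finrank_zero_iff.1 (Nat.le_zero.1 hn)
    exact ⟨0, fun x => Subsingleton.elim _ _⟩
  | succ n ih =>
    intro V _ _ _ _ _ hn f hf
    by_cases hV : ∀ W : LieSubmodule F G V, W = ⊥ ∨ W = ⊤
    · exact whitehead_irred hV f hf
    push Not at hV
    obtain ⟨W, hW0, hW1⟩ := hV
    have h0 : W.toSubmodule ≠ ⊥ := by simpa using hW0
    have h1 : W.toSubmodule ≠ ⊤ := by simpa using hW1
    have hlt := Submodule.finrank_lt h1
    have hadd := W.toSubmodule.finrank_quotient_add_finrank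
    have hpos : 0 < Module.finrank F W.toSubmodule :=
      Nat.pos_of_ne_zero (by rw [Ne, Submodule.finrank_eq_zero]; exact h0)
    obtain ⟨u, hu⟩ := ih (V ⧸ W) (by change Module.finrank F (V ⧸ W.toSubmodule) ≤ n; omega)
      ((LieSubmodule.Quotient.mk' W : V →ₗ[F] V ⧸ W) ∘ₗ f) (fun x y => by
        simp only [LinearMap.comp_apply, hf, map_sub, LieModuleHom.coe_toLinearMap, LieModuleHom.map_lie])
    obtain ⟨v, rfl⟩ := LieSubmodule.Quotient.surjective_mk' W u
    have hmem : ∀ x, f x - ⁅x, v⁆ ∈ W := by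
      intro x
      rw [← LieSubmodule.Quotient.mk_eq_zero', ← LieSubmodule.Quotient.mk'_apply, map_sub,
        LieModuleHom.map_lie, ← hu]
      simp
    let g : G →ₗ[F] W :=
      { toFun := fun x => ⟨f x - ⁅x, v⁆, hmem x⟩
        map_add' := fun x y => Subtype.ext (by simp; abel)
        map_smul' := fun c x => Subtype.ext (by simp [smul_sub]) }
    obtain ⟨w, hw⟩ := ih W (by change Module.finrank F W.toSubmodule ≤ n; omega) g (fun x y => Subtype.ext (by
        change f ⁅x, y⁆ - ⁅⁅x, y⁆, v⁆ = ⁅x, f y - ⁅y, v⁆⁆ - ⁅y, f x - ⁅x, v⁆⁆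
        rw [hf, lie_sub, lie_sub, lie_lie]; abel))
    refine ⟨v + w, fun x => ?_⟩
    have : f x - ⁅x, v⁆ = ⁅x, (w : V)⁆ := congrArg Subtype.val (hw x)
    rw [lie_add, ← this]; abel

/-! ### Whitehead's second lemma -/

open LieAlgebra LieModule in
/-- The second Whitehead lemma for cocycles `e` with values in the invariants of `V`: `x ↦ e x` is
a 1-cocycle with values in `Hom(G, Vᴳ)`, to which the first lemma applies. -/
theorem whitehead_second_triv {F G : Type*} [Field F] [CharZero F] [LieRing G]
    [LieAlgebra F G] [FiniteDimensional F G] [IsKilling F G]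
    {V : Type*} [AddCommGroup V] [Module F V]
    [FiniteDimensional F V] [LieRingModule G V] [LieModule F G V]
    (e : G →ₗ[F] G →ₗ[F] V) (he : ∀ g x y : G, ⁅g, e x y⁆ = 0)
    (hcoc : ∀ x y z : G, e ⁅x, y⁆ z = e x ⁅y, z⁆ - e y ⁅x, z⁆) :
    ∃ b : G →ₗ[F] V, (∀ g x : G, ⁅g, b x⁆ = 0) ∧ ∀ x y : G, e x y = - b ⁅x, y⁆ := by
  let U := maxTrivSubmodule F G V
  let f : G →ₗ[F] G →ₗ[F] U := LinearMap.mk₂ F (fun x y => ⟨e x y, fun g => he g x y⟩)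
    (fun _ _ _ => Subtype.ext (by simp)) (fun _ _ _ => Subtype.ext (by simp))
    (fun _ _ _ => Subtype.ext (by simp)) (fun _ _ _ => Subtype.ext (by simp))
  have htriv : ∀ (g : G) (u : U), ⁅g, u⁆ = 0 := fun g u => LieModule.IsTrivial.trivial g u
  obtain ⟨b, hb⟩ := whitehead_first (F := F) (G := G) _ (G →ₗ[F] U) le_rfl f (fun x y => by
    ext z
    simp only [LieHom.lie_apply, LinearMap.sub_apply, htriv]
    simp [f, hcoc]
    abel)
  refine ⟨U.toSubmodule.subtype ∘ₗ b, fun g x => (b x).2 g, fun x y => ?_⟩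
  have h1 := congrArg Subtype.val (LinearMap.congr_fun (hb x) y)
  rw [LieHom.lie_apply, htriv, zero_sub] at h1
  exact h1

open LieAlgebra LieModule in
/-- Whitehead's second lemma `H²(G, V) = 0`, by dimension shifting along the equivariant map
`θ : V → Hom(G, V)`, `θ m z = ⁅z, m⁆`. Modulo the image of `θ`, the map `x ↦ c x` is a 1-cocycle,
hence a coboundary. Lifting gives `a : G → V` such that `c + da` takes values in `ker θ`, that is, in
the invariants of `V`. -/
theorem whitehead_second {F G : Type*} [Field F] [CharZero F] [LieRing G]
    [LieAlgebra F G] [FiniteDimensional F G] [IsKilling F G]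
    {V : Type*} [AddCommGroup V] [Module F V]
    [FiniteDimensional F V] [LieRingModule G V] [LieModule F G V]
    (c : G →ₗ[F] G →ₗ[F] V) (halt : ∀ x y : G, c x y = - c y x)
    (hcoc : ∀ x y z : G, ⁅x, c y z⁆ - ⁅y, c x z⁆ + ⁅z, c x y⁆
      - c ⁅x, y⁆ z + c ⁅x, z⁆ y - c ⁅y, z⁆ x = 0) :
    ∃ b : G →ₗ[F] V, ∀ x y : G, c x y = ⁅x, b y⁆ - ⁅y, b x⁆ - b ⁅x, y⁆ := by
  let θ : V →ₗ⁅F, G⁆ (G →ₗ[F] V) :=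
    { toFun := fun m =>
        { toFun := fun z => ⁅z, m⁆
          map_add' := by simp
          map_smul' := by simp }
      map_add' := fun m n => by ext z; simp
      map_smul' := fun t m => by ext z; simp
      map_lie' := fun {x m} => by
        ext z
        rw [LieHom.lie_apply]
        change ⁅z, ⁅x, m⁆⁆ = ⁅x, ⁅z, m⁆⁆ - ⁅⁅x, z⁆, m⁆
        rw [leibniz_lie x z m]; abel }
  have hθ : ∀ m z, θ m z = ⁅z, m⁆ := fun _ _ => rfl
  let P := θ.range
  have hcP : ∀ x y, c ⁅x, y⁆ - (⁅x, c y⁆ - ⁅y, c x⁆) = θ (c x y) := by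
    intro x y
    ext z
    simp only [LinearMap.sub_apply, LieHom.lie_apply, hθ]
    have h := hcoc x y z
    rw [halt ⁅x, z⁆ y, halt ⁅y, z⁆ x] at h
    rw [← sub_eq_zero, ← neg_eq_zero, ← h]
    abel
  obtain ⟨u, hu⟩ := whitehead_first (F := F) (G := G) _ ((G →ₗ[F] V) ⧸ P) le_rfl
    ((LieSubmodule.Quotient.mk' P : (G →ₗ[F] V) →ₗ[F] (G →ₗ[F] V) ⧸ P) ∘ₗ c) (fun x y => by
      rw [← sub_eq_zero]
      simp only [LinearMap.comp_apply, LieModuleHom.coe_toLinearMap, ← LieModuleHom.map_lie,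
        ← map_sub]
      rw [hcP, LieSubmodule.Quotient.mk'_apply, LieSubmodule.Quotient.mk_eq_zero']
      exact ⟨_, rfl⟩)
  obtain ⟨ψ, rfl⟩ := LieSubmodule.Quotient.surjective_mk' P u
  have hmem : ∀ x, c x - ⁅x, ψ⁆ ∈ LinearMap.range (θ : V →ₗ[F] (G →ₗ[F] V)) := by
    intro x
    have : c x - ⁅x, ψ⁆ ∈ P := by
      rw [← LieSubmodule.Quotient.mk_eq_zero', ← LieSubmodule.Quotient.mk'_apply, map_sub,
        LieModuleHom.map_lie, ← hu]
      simp
    exact this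
  let g : G →ₗ[F] LinearMap.range (θ : V →ₗ[F] (G →ₗ[F] V)) :=
    { toFun := fun x => ⟨c x - ⁅x, ψ⁆, hmem x⟩
      map_add' := fun x y => Subtype.ext (by simp; abel)
      map_smul' := fun t x => Subtype.ext (by simp [smul_sub]) }
  obtain ⟨a, ha⟩ := Module.projective_lifting_property
    (θ : V →ₗ[F] (G →ₗ[F] V)).rangeRestrict g (LinearMap.surjective_rangeRestrict _)
  have hc' : ∀ x, c x = ⁅x, ψ⁆ + θ (a x) := by
    intro x
    have h1 : θ (a x) = c x - ⁅x, ψ⁆ := congrArg Subtype.val (LinearMap.congr_fun ha x)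
    rw [h1]; abel
  -- `e = c + da` takes its values in the invariants of `V`.
  let e : G →ₗ[F] G →ₗ[F] V := LinearMap.mk₂ F
    (fun x y => c x y + (⁅x, a y⁆ - ⁅y, a x⁆ - a ⁅x, y⁆))
    (fun _ _ _ => by simp; abel) (fun _ _ _ => by simp [smul_sub, smul_add])
    (fun _ _ _ => by simp; abel) (fun _ _ _ => by simp [smul_sub, smul_add])
  have he : ∀ x y, e x y = c x y + (⁅x, a y⁆ - ⁅y, a x⁆ - a ⁅x, y⁆) := fun _ _ => rfl
  have hinv : ∀ g x y : G, ⁅g, e x y⁆ = 0 := by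
    intro g x y
    have h : θ (e x y) = 0 := by
      have h1 := hcP x y
      rw [hc' ⁅x, y⁆, hc' x, hc' y, lie_add, lie_add, lie_lie, ← LieModuleHom.map_lie,
        ← LieModuleHom.map_lie, ← hc' x] at h1
      rw [he, map_add, ← h1, map_sub, map_sub]
      abel
    rw [← hθ, h, LinearMap.zero_apply]
  have healt : ∀ x y, e x y = - e y x := by
    intro x y
    rw [he, he, halt x y, ← lie_skew x y, map_neg]
    abel
  have hecoc : ∀ x y z : G, e ⁅x, y⁆ z = e x ⁅y, z⁆ - e y ⁅x, z⁆ := by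
    intro x y z
    have h1 : ⁅x, e y z⁆ - ⁅y, e x z⁆ + ⁅z, e x y⁆
        - e ⁅x, y⁆ z + e ⁅x, z⁆ y - e ⁅y, z⁆ x = 0 := by
      have hJ : a ⁅⁅x, y⁆, z⁆ = a ⁅⁅x, z⁆, y⁆ - a ⁅⁅y, z⁆, x⁆ := by
        rw [← map_sub]
        congr 1
        rw [← lie_skew ⁅x, z⁆ y, ← lie_skew ⁅y, z⁆ x, leibniz_lie y x z, ← lie_skew x y, neg_lie]
        abel
      have := hcoc x y z
      simp only [he, lie_add, lie_sub]
      rw [hJ, lie_lie x y (a z), lie_lie x z (a y), lie_lie y z (a x), ← this]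
      abel
    rw [hinv, hinv, hinv, healt ⁅x, z⁆ y, healt ⁅y, z⁆ x] at h1
    rw [← sub_eq_zero, ← neg_eq_zero, ← h1]
    abel
  obtain ⟨b, hb0, hb⟩ := whitehead_second_triv e hinv hecoc
  refine ⟨b - a, fun x y => ?_⟩
  have h1 := hb x y
  rw [he] at h1
  simp only [LinearMap.sub_apply, lie_sub, hb0]
  rw [eq_sub_of_add_eq h1]
  abel

/-! ### Lifting homomorphisms -/

open LieAlgebra LieModule in
/-- If the bracket of `L` is antisymmetric and `J` is an abelian ideal, a linear map `s : G → L`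
that is multiplicative modulo `J` can be changed by a map into `J` to become multiplicative. The
defect of `s` is a 2-cocycle with values in the `G`-module `J`. -/
theorem deform_lie {F G L : Type*} [Field F] [CharZero F] [LieRing G]
    [LieAlgebra F G] [FiniteDimensional F G] [IsKilling F G]
    [AddCommGroup L] [Module F L] [FiniteDimensional F L]
    (br : L →ₗ[F] L →ₗ[F] L)
    (hLeib : ∀ x y z : L, br x (br y z) = br (br x y) z - br (br x z) y)
    (halt : ∀ x y : L, br x y = - br y x) (J : Submodule F L)
    (hJ : ∀ x : L, ∀ a ∈ J, br x a ∈ J) (hab : ∀ a ∈ J, ∀ b ∈ J, br a b = 0)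
    (s : G →ₗ[F] L) (hs : ∀ x y : G, s ⁅x, y⁆ - br (s x) (s y) ∈ J) :
    ∃ t : G →ₗ[F] L, (∀ x, t x - s x ∈ J) ∧ ∀ x y : G, t ⁅x, y⁆ = br (t x) (t y) := by
  have hact : ∀ (x y : G) (m : L), m ∈ J → br (s ⁅x, y⁆) m = br (br (s x) (s y)) m := by
    intro x y m hm
    rw [← sub_eq_zero, ← LinearMap.sub_apply, ← map_sub]
    exact hab _ (hs x y) m hm
  let : LieRingModule G J :=
    { bracket := fun x m => ⟨br (s x) m, hJ _ _ m.2⟩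
      add_lie := fun x y m => Subtype.ext (by simp)
      lie_add := fun x m n => Subtype.ext (by simp)
      leibniz_lie := fun x y m => Subtype.ext (by
        change br (s x) (br (s y) m) = br (s ⁅x, y⁆) m + br (s y) (br (s x) m)
        rw [hact _ _ _ m.2, hLeib (s x), halt (s y) (br (s x) m)]
        abel) }
  have hbr : ∀ (x : G) (m : J), ((⁅x, m⁆ : J) : L) = br (s x) m := fun _ _ => rfl
  let : LieModule F G J :=
    { smul_lie := fun t x m => Subtype.ext (by simp [hbr])
      lie_smul := fun t x m => Subtype.ext (by simp [hbr]) }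
  let c : G →ₗ[F] G →ₗ[F] J := LinearMap.mk₂ F (fun x y => ⟨s ⁅x, y⁆ - br (s x) (s y), hs x y⟩)
    (fun _ _ _ => Subtype.ext (by simp; abel)) (fun _ _ _ => Subtype.ext (by simp [smul_sub]))
    (fun _ _ _ => Subtype.ext (by simp; abel)) (fun _ _ _ => Subtype.ext (by simp [smul_sub]))
  have hc : ∀ x y, (c x y : L) = s ⁅x, y⁆ - br (s x) (s y) := fun _ _ => rfl
  obtain ⟨b, hb⟩ := whitehead_second (F := F) c
    (fun x y => Subtype.ext (by
      rw [Submodule.coe_neg, hc, hc, ← lie_skew x y, map_neg, halt (s x)]; abel))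
    (fun x y z => Subtype.ext (by
      simp only [Submodule.coe_add, Submodule.coe_sub, hbr, hc, map_sub, Submodule.coe_zero]
      have hJac : s ⁅⁅x, y⁆, z⁆ = s ⁅⁅x, z⁆, y⁆ - s ⁅⁅y, z⁆, x⁆ := by
        rw [← map_sub]
        congr 1
        rw [← lie_skew ⁅x, z⁆ y, ← lie_skew ⁅y, z⁆ x, leibniz_lie y x z, ← lie_skew x y, neg_lie]
        abel
      rw [hJac, halt (s ⁅x, y⁆), halt (s ⁅x, z⁆), halt (s ⁅y, z⁆), hLeib (s x),
        halt (s y) (br (s x) (s z)), halt (s z) (br (s x) (s y))]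
      abel))
  refine ⟨s + J.subtype ∘ₗ b, fun x => by simp, fun x y => ?_⟩
  have h1 := congrArg Subtype.val (hb x y)
  simp only [hc, Submodule.coe_sub, hbr] at h1
  simp only [LinearMap.add_apply, LinearMap.comp_apply, Submodule.subtype_apply, map_add]
  rw [hab _ (b x).2 _ (b y).2, halt (b x) (s y), sub_eq_iff_eq_add.1 h1]
  abel

open LieAlgebra LieModule in
/-- The analogue of `deform_lie` for an ideal `J` with `[L, J] = 0`. Here `J` is a `G`-module under
`⁅x, m⁆ = -[m, s x]`, and the Leibniz identity says that the defect of `s`, as a function of its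
second argument, is a 1-cocycle with values in `Hom(G, J)`. -/
theorem deform_leftTriv {F G L : Type*} [Field F] [CharZero F] [LieRing G]
    [LieAlgebra F G] [FiniteDimensional F G] [IsKilling F G]
    [AddCommGroup L] [Module F L] [FiniteDimensional F L]
    (br : L →ₗ[F] L →ₗ[F] L)
    (hLeib : ∀ x y z : L, br x (br y z) = br (br x y) z - br (br x z) y)
    (J : Submodule F L)
    (hJ : ∀ x : L, ∀ a ∈ J, br a x ∈ J) (hz : ∀ x : L, ∀ a ∈ J, br x a = 0)
    (s : G →ₗ[F] L) (hs : ∀ x y : G, s ⁅x, y⁆ - br (s x) (s y) ∈ J) :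
    ∃ t : G →ₗ[F] L, (∀ x, t x - s x ∈ J) ∧ ∀ x y : G, t ⁅x, y⁆ = br (t x) (t y) := by
  have hact : ∀ (x y : G) (m : L), br m (s ⁅x, y⁆) = br m (br (s x) (s y)) := by
    intro x y m
    rw [← sub_eq_zero, ← map_sub]
    exact hz _ _ (hs x y)
  let : LieRingModule G J :=
    { bracket := fun x m => ⟨- br m (s x), J.neg_mem (hJ _ _ m.2)⟩
      add_lie := fun x y m => Subtype.ext (by simp; abel)
      lie_add := fun x m n => Subtype.ext (by simp; abel)
      leibniz_lie := fun x y m => Subtype.ext (by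
        change - br (- br m (s y)) (s x) = - br m (s ⁅x, y⁆) + - br (- br m (s x)) (s y)
        rw [hact, hLeib (m : L)]
        simp) }
  have hbr : ∀ (x : G) (m : J), ((⁅x, m⁆ : J) : L) = - br m (s x) := fun _ _ => rfl
  let : LieModule F G J :=
    { smul_lie := fun t x m => Subtype.ext (by simp [hbr])
      lie_smul := fun t x m => Subtype.ext (by simp [hbr]) }
  let f : G →ₗ[F] G →ₗ[F] J := LinearMap.mk₂ F (fun y x => ⟨s ⁅x, y⁆ - br (s x) (s y), hs x y⟩)
    (fun _ _ _ => Subtype.ext (by simp; abel)) (fun _ _ _ => Subtype.ext (by simp [smul_sub]))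
    (fun _ _ _ => Subtype.ext (by simp; abel)) (fun _ _ _ => Subtype.ext (by simp [smul_sub]))
  have hf : ∀ x y, (f y x : L) = s ⁅x, y⁆ - br (s x) (s y) := fun _ _ => rfl
  obtain ⟨b, hb⟩ := whitehead_first (F := F) (G := G) _ (G →ₗ[F] J) le_rfl f (fun y z => by
    ext x
    simp only [LieHom.lie_apply, LinearMap.sub_apply, Submodule.coe_sub, hbr, hf, hact, hLeib (s x),
      map_sub]
    rw [leibniz_lie x y z, ← lie_skew x y, ← lie_skew x z, ← lie_skew ⁅z, x⁆ y]
    simp only [map_add, map_neg, neg_lie, lie_neg, LinearMap.neg_apply]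
    abel)
  refine ⟨s - J.subtype ∘ₗ b, fun x => by simp, fun x y => ?_⟩
  have h1 := congrArg Subtype.val (LinearMap.congr_fun (hb y) x)
  rw [hf, LieHom.lie_apply, Submodule.coe_sub, hbr] at h1
  rw [← lie_skew y x, map_neg, Submodule.coe_neg] at h1
  simp only [LinearMap.sub_apply, LinearMap.comp_apply, Submodule.subtype_apply, map_sub]
  rw [hz _ _ (b y).2, hz _ _ (b y).2, sub_eq_iff_eq_add.1 h1]
  abel

open LieAlgebra LieModule in
/-- The lemma `deform_lie` applied to `L ⧸ I`, when `I` contains `[J, J]` and all the elements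
`[x, y] + [y, x]`, with the result lifted back to `L`. -/
theorem deform_step {F G L : Type*} [Field F] [CharZero F] [LieRing G]
    [LieAlgebra F G] [FiniteDimensional F G] [IsKilling F G]
    [AddCommGroup L] [Module F L] [FiniteDimensional F L]
    (br : L →ₗ[F] L →ₗ[F] L)
    (hLeib : ∀ x y z : L, br x (br y z) = br (br x y) z - br (br x z) y)
    (I J : Submodule F L) (hI : IsLeibnizIdeal br I) (hJ : IsLeibnizIdeal br J)
    (hsq : ∀ x y : L, br x y + br y x ∈ I)
    (hab : ∀ a ∈ J, ∀ b ∈ J, br a b ∈ I)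
    (s : G →ₗ[F] L) (hs : ∀ x y : G, s ⁅x, y⁆ - br (s x) (s y) ∈ J) :
    ∃ t : G →ₗ[F] L, (∀ x, t x - s x ∈ J ⊔ I) ∧ ∀ x y : G, t ⁅x, y⁆ - br (t x) (t y) ∈ I := by
  obtain ⟨σ, hσ⟩ := I.mkQ.exists_rightInverse_of_surjective (LinearMap.range_eq_top.2 I.mkQ_surjective)
  have hσ' : ∀ q, I.mkQ (σ q) = q := fun q => LinearMap.congr_fun hσ q
  let br' : (L ⧸ I) →ₗ[F] (L ⧸ I) →ₗ[F] (L ⧸ I) := (br.compl₁₂ σ σ).compr₂ I.mkQ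
  have hbr' : ∀ x y, br' (I.mkQ x) (I.mkQ y) = I.mkQ (br x y) := by
    intro x y
    change I.mkQ (br (σ (I.mkQ x)) (σ (I.mkQ y))) = _
    have hx : σ (I.mkQ x) - x ∈ I := by
      rw [← Submodule.Quotient.mk_eq_zero, ← Submodule.mkQ_apply, map_sub, hσ', sub_self]
    have hy : σ (I.mkQ y) - y ∈ I := by
      rw [← Submodule.Quotient.mk_eq_zero, ← Submodule.mkQ_apply, map_sub, hσ', sub_self]
    rw [← sub_eq_zero, ← map_sub, Submodule.mkQ_apply, Submodule.Quotient.mk_eq_zero]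
    have := I.add_mem (hI.1 _ hx (σ (I.mkQ y))) (hI.2 _ hy x)
    simpa using this
  obtain ⟨t, ht1, ht2⟩ := deform_lie (F := F) (G := G) br'
    (fun x y z => by
      obtain ⟨x, rfl⟩ := I.mkQ_surjective x
      obtain ⟨y, rfl⟩ := I.mkQ_surjective y
      obtain ⟨z, rfl⟩ := I.mkQ_surjective z
      simp only [hbr', hLeib x y z, map_sub])
    (fun x y => by
      obtain ⟨x, rfl⟩ := I.mkQ_surjective x
      obtain ⟨y, rfl⟩ := I.mkQ_surjective y
      rw [hbr', hbr', eq_neg_iff_add_eq_zero, ← map_add, Submodule.mkQ_apply,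
        Submodule.Quotient.mk_eq_zero]
      exact hsq x y)
    (J.map I.mkQ)
    (by
      rintro x _ ⟨a, ha, rfl⟩
      obtain ⟨x, rfl⟩ := I.mkQ_surjective x
      exact ⟨br x a, hJ.2 a ha x, (hbr' _ _).symm⟩)
    (by
      rintro _ ⟨a, ha, rfl⟩ _ ⟨b, hb, rfl⟩
      rw [hbr', Submodule.mkQ_apply, Submodule.Quotient.mk_eq_zero]
      exact hab a ha b hb)
    (I.mkQ ∘ₗ s)
    (fun x y => ⟨_, hs x y, by simp only [map_sub, LinearMap.comp_apply, hbr']⟩)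
  refine ⟨σ ∘ₗ t, fun x => ?_, fun x y => ?_⟩
  · obtain ⟨a, ha, hax⟩ := ht1 x
    have h1 : σ (t x) - s x - a ∈ I := by
      rw [← Submodule.Quotient.mk_eq_zero, ← Submodule.mkQ_apply, map_sub, map_sub, hσ', hax]
      simp
    have := Submodule.add_mem_sup ha h1
    simpa using this
  · rw [← Submodule.Quotient.mk_eq_zero, ← Submodule.mkQ_apply, map_sub, ← hbr']
    simp only [LinearMap.comp_apply, hσ', ht2, sub_self]

/-! ### Derived series and the Leibniz kernel -/

section Leibniz
variable {F L : Type*} [Field F] [AddCommGroup L] [Module F L] {br : L →ₗ[F] L →ₗ[F] L}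

theorem lds_mono {A B : Submodule F L} (h : A ≤ B) (n : ℕ) :
    leibnizDerivedSeries br A n ≤ leibnizDerivedSeries br B n := by
  induction n with
  | zero => exact h
  | succ n ih =>
    refine Submodule.span_mono ?_
    rintro _ ⟨x, hx, y, hy, rfl⟩
    exact ⟨x, ih hx, y, ih hy, rfl⟩

theorem lds_add (A : Submodule F L) (m n : ℕ) :
    leibnizDerivedSeries br A (m + n) =
      leibnizDerivedSeries br (leibnizDerivedSeries br A m) n := by
  induction n with
  | zero => rfl
  | succ n ih =>
    rw [← add_assoc]
    simp only [leibnizDerivedSeries]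
    rw [ih]

theorem lds_ideal (hLeib : ∀ x y z : L, br x (br y z) = br (br x y) z - br (br x z) y)
    {A : Submodule F L} (h : IsLeibnizIdeal br A) (n : ℕ) :
    IsLeibnizIdeal br (leibnizDerivedSeries br A n) := by
  induction n with
  | zero => exact h
  | succ n ih =>
    have hin : ∀ x ∈ leibnizDerivedSeries br A n, ∀ y ∈ leibnizDerivedSeries br A n,
        br x y ∈ leibnizDerivedSeries br A (n + 1) := fun x hx y hy =>
      Submodule.subset_span ⟨x, hx, y, hy, rfl⟩
    constructor
    · intro a ha y
      have : leibnizDerivedSeries br A (n + 1) ≤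
          (leibnizDerivedSeries br A (n + 1)).comap (br.flip y) := by
        refine Submodule.span_le.2 ?_
        rintro _ ⟨u, hu, v, hv, rfl⟩
        change br (br u v) y ∈ leibnizDerivedSeries br A (n + 1)
        have e : br (br u v) y = br u (br v y) + br (br u y) v := by rw [hLeib]; abel
        rw [e]
        exact Submodule.add_mem _ (hin _ hu _ (ih.1 _ hv _)) (hin _ (ih.1 _ hu _) _ hv)
      exact this ha
    · intro a ha y
      have : leibnizDerivedSeries br A (n + 1) ≤
          (leibnizDerivedSeries br A (n + 1)).comap (br y) := by
        refine Submodule.span_le.2 ?_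
        rintro _ ⟨u, hu, v, hv, rfl⟩
        change br y (br u v) ∈ leibnizDerivedSeries br A (n + 1)
        rw [hLeib]
        exact Submodule.sub_mem _ (hin _ (ih.2 _ hu _) _ hv) (hin _ (ih.2 _ hv _) _ hu)
      exact this ha

theorem solvable_of_lds_le {A R : Submodule F L} (hR : IsSolvableSub br R) (n : ℕ)
    (h : leibnizDerivedSeries br A n ≤ R) : IsSolvableSub br A := by
  obtain ⟨m, hm⟩ := hR
  refine ⟨n + m, ?_⟩
  rw [lds_add, eq_bot_iff, ← hm]
  exact lds_mono h m

theorem lds_sup_le {A R : Submodule F L} (hR : IsLeibnizIdeal br R) (n : ℕ) :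
    leibnizDerivedSeries br (A ⊔ R) n ≤ leibnizDerivedSeries br A n ⊔ R := by
  induction n with
  | zero => exact le_rfl
  | succ n ih =>
    refine Submodule.span_le.2 ?_
    rintro _ ⟨x, hx, y, hy, rfl⟩
    obtain ⟨a, ha, r, hr, rfl⟩ := Submodule.mem_sup.1 (ih hx)
    obtain ⟨b, hb, q, hq, rfl⟩ := Submodule.mem_sup.1 (ih hy)
    have h1 : br a b ∈ leibnizDerivedSeries br A (n + 1) :=
      Submodule.subset_span ⟨a, ha, b, hb, rfl⟩
    have h2 : br r (b + q) + br a q ∈ R := R.add_mem (hR.1 _ hr _) (hR.2 _ hq _)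
    have e : br (a + r) (b + q) = br a b + (br r (b + q) + br a q) := by
      simp only [map_add, LinearMap.add_apply]
      abel
    rw [SetLike.mem_coe, e]
    exact Submodule.add_mem_sup h1 h2

/-- The Leibniz kernel of `(L, br)`: the span of the elements `[x, y] + [y, x]`. When the
characteristic is not two, this is the span of the squares `[x, x]`; the quotient by it is the largest
Lie algebra quotient of `L`. -/
def leibnizKernel (br : L →ₗ[F] L →ₗ[F] L) : Submodule F L :=
  Submodule.span F {z : L | ∃ x y : L, z = br x y + br y x}

/-- The Leibniz kernel is annihilated by left multiplications, `[L, Leib(L)] = 0`. -/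
theorem br_leibnizKernel (hLeib : ∀ x y z : L, br x (br y z) = br (br x y) z - br (br x z) y)
    (x : L) {a : L} (ha : a ∈ leibnizKernel br) : br x a = 0 := by
  have : leibnizKernel br ≤ LinearMap.ker (br x) := by
    refine Submodule.span_le.2 ?_
    rintro _ ⟨u, v, rfl⟩
    change br x (br u v + br v u) = 0
    rw [map_add, hLeib, hLeib]; abel
  exact this ha

theorem leibnizKernel_ideal (hLeib : ∀ x y z : L, br x (br y z) = br (br x y) z - br (br x z) y) :
    IsLeibnizIdeal br (leibnizKernel br) := by
  refine ⟨fun a ha y => ?_, fun a ha y => ?_⟩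
  · have h : br a y + br y a ∈ leibnizKernel br := Submodule.subset_span ⟨a, y, rfl⟩
    rwa [br_leibnizKernel hLeib y ha, add_zero] at h
  · rw [br_leibnizKernel hLeib y ha]
    exact Submodule.zero_mem _

theorem IsLeibnizIdeal.sup {I J : Submodule F L} (hI : IsLeibnizIdeal br I)
    (hJ : IsLeibnizIdeal br J) : IsLeibnizIdeal br (I ⊔ J) := by
  constructor
  · intro a ha y
    obtain ⟨u, hu, v, hv, rfl⟩ := Submodule.mem_sup.1 ha
    rw [map_add, LinearMap.add_apply]
    exact Submodule.add_mem_sup (hI.1 _ hu _) (hJ.1 _ hv _)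
  · intro a ha y
    obtain ⟨u, hu, v, hv, rfl⟩ := Submodule.mem_sup.1 ha
    rw [map_add]
    exact Submodule.add_mem_sup (hI.2 _ hu _) (hJ.2 _ hv _)

end Leibniz

/-! ### The Levi decomposition -/

/-- **Barnes' Levi theorem.**  A finite-dimensional Leibniz algebra over
a field of characteristic zero with solvable radical `R` admits a semisimple Lie
subalgebra `S` with `L = S ⊕ R` as vector spaces. -/
theorem levi_decomposition_leibniz
    {F L : Type*} [Field F] [CharZero F] [AddCommGroup L] [Module F L]
    [FiniteDimensional F L]
    (br : L →ₗ[F] L →ₗ[F] L)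
    (hLeib : ∀ x y z : L, br x (br y z) = br (br x y) z - br (br x z) y)
    (R : Submodule F L)
    (hR : IsLeibnizIdeal br R ∧ IsSolvableSub br R ∧
      ∀ J : Submodule F L, IsLeibnizIdeal br J → IsSolvableSub br J → J ≤ R) :
    ∃ S : Submodule F L,
      (∀ x ∈ S, ∀ y ∈ S, br x y ∈ S) ∧
      (∀ x ∈ S, ∀ y ∈ S, br x y = - br y x) ∧
      (∀ J : Submodule F L, J ≤ S →
        (∀ a ∈ J, ∀ x ∈ S, br a x ∈ J ∧ br x a ∈ J) →
        IsSolvableSub br J → J = ⊥) ∧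
      S ⊓ R = ⊥ ∧ S ⊔ R = ⊤ := by
  obtain ⟨hRI, hRS, hRmax⟩ := hR
  have hKR : leibnizKernel br ≤ R := by
    refine hRmax _ (leibnizKernel_ideal hLeib) ⟨1, ?_⟩
    refine (Submodule.span_eq_bot).2 ?_
    rintro _ ⟨x, -, y, hy, rfl⟩
    exact br_leibnizKernel hLeib x hy
  -- A linear section `σ` of `L → L ⧸ R` carries the bracket over to `br'`, which makes `L ⧸ R` a Lie
  -- algebra because `R` contains the Leibniz kernel.
  obtain ⟨σ, hσ⟩ := R.mkQ.exists_rightInverse_of_surjective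
    (LinearMap.range_eq_top.2 R.mkQ_surjective)
  have hσ' : ∀ q, R.mkQ (σ q) = q := fun q => LinearMap.congr_fun hσ q
  have hmk : ∀ x, R.mkQ x = 0 ↔ x ∈ R := fun x => Submodule.Quotient.mk_eq_zero R
  let br' : (L ⧸ R) →ₗ[F] (L ⧸ R) →ₗ[F] (L ⧸ R) := (br.compl₁₂ σ σ).compr₂ R.mkQ
  have hbr' : ∀ x y, br' (R.mkQ x) (R.mkQ y) = R.mkQ (br x y) := by
    intro x y
    change R.mkQ (br (σ (R.mkQ x)) (σ (R.mkQ y))) = _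
    have hx : σ (R.mkQ x) - x ∈ R := by rw [← hmk, map_sub, hσ', sub_self]
    have hy : σ (R.mkQ y) - y ∈ R := by rw [← hmk, map_sub, hσ', sub_self]
    rw [← sub_eq_zero, ← map_sub, hmk]
    have := R.add_mem (hRI.1 _ hx (σ (R.mkQ y))) (hRI.2 _ hy x)
    simpa using this
  have hskew : ∀ x y, br' x y = - br' y x := by
    intro x y
    obtain ⟨x, rfl⟩ := R.mkQ_surjective x
    obtain ⟨y, rfl⟩ := R.mkQ_surjective y
    rw [hbr', hbr', eq_neg_iff_add_eq_zero, ← map_add, hmk]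
    exact hKR (Submodule.subset_span ⟨x, y, rfl⟩)
  let : LieRing (L ⧸ R) :=
    { bracket := fun x y => br' x y
      add_lie := fun x y z => by simp
      lie_add := fun x y z => by simp
      lie_self := fun x => by
        change br' x x = 0
        have h := eq_neg_iff_add_eq_zero.1 (hskew x x)
        rw [← two_smul F] at h
        exact (smul_eq_zero.1 h).resolve_left two_ne_zero
      leibniz_lie := fun x y z => by
        change br' x (br' y z) = br' (br' x y) z + br' y (br' x z)
        rw [hskew y (br' x z)]
        obtain ⟨x, rfl⟩ := R.mkQ_surjective x
        obtain ⟨y, rfl⟩ := R.mkQ_surjective y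
        obtain ⟨z, rfl⟩ := R.mkQ_surjective z
        simp only [hbr', hLeib x y z, map_sub]
        abel }
  let : LieAlgebra F (L ⧸ R) :=
    { lie_smul := fun t x y => by
        change br' x (t • y) = t • br' x y
        simp }
  have hlie : ∀ x y : L ⧸ R, ⁅x, y⁆ = br' x y := fun _ _ => rfl
  -- The preimage in `L` of an abelian ideal of `L ⧸ R` is a solvable ideal, hence is contained in `R`.
  have : LieAlgebra.HasTrivialRadical F (L ⧸ R) := by
    rw [LieAlgebra.hasTrivialRadical_iff_no_abelian_ideals]
    intro A hA
    have hle : A.toSubmodule.comap R.mkQ ≤ R := by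
      refine hRmax _ ⟨fun a ha y => ?_, fun a ha y => ?_⟩ (solvable_of_lds_le hRS 1 ?_)
      · change R.mkQ (br a y) ∈ A
        rw [← hbr', ← hlie]
        exact lie_mem_left F _ A _ _ ha
      · change R.mkQ (br y a) ∈ A
        rw [← hbr', ← hlie]
        exact lie_mem_right F _ A _ _ ha
      · refine Submodule.span_le.2 ?_
        rintro _ ⟨x, hx, y, hy, rfl⟩
        change br x y ∈ R
        rw [← hmk, ← hbr', ← hlie]
        exact congrArg Subtype.val (hA.trivial ⟨R.mkQ x, hx⟩ ⟨R.mkQ y, hy⟩)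
    rw [eq_bot_iff]
    intro q hq
    obtain ⟨x, rfl⟩ := R.mkQ_surjective q
    rw [LieSubmodule.mem_bot, hmk]
    exact hle hq
  -- Successive approximation: sections of `L → L ⧸ R` that are multiplicative modulo the `n`-th derived
  -- term of `R` and the Leibniz kernel.
  have chain : ∀ n : ℕ, ∃ s : (L ⧸ R) →ₗ[F] L, (∀ x, R.mkQ (s x) = x) ∧
      ∀ x y : L ⧸ R, s ⁅x, y⁆ - br (s x) (s y) ∈ leibnizDerivedSeries br R n ⊔ leibnizKernel br := by
    intro n
    induction n with
    | zero =>
      refine ⟨σ, hσ', fun x y => Submodule.mem_sup_left ?_⟩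
      change _ ∈ R
      rw [← hmk, map_sub, hσ', ← hbr', hσ', hσ', hlie, sub_self]
    | succ n ih =>
      obtain ⟨s, hs1, hs2⟩ := ih
      have hK := leibnizKernel_ideal hLeib
      have hD := lds_ideal hLeib hRI
      have hDR : ∀ m, leibnizDerivedSeries br R m ≤ R := by
        intro m
        induction m with
        | zero => exact le_rfl
        | succ m ihm =>
          refine Submodule.span_le.2 ?_
          rintro _ ⟨x, hx, y, -, rfl⟩
          exact hRI.1 _ (ihm hx) _
      obtain ⟨t, ht1, ht2⟩ := deform_step br hLeib
        (leibnizDerivedSeries br R (n + 1) ⊔ leibnizKernel br)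
        (leibnizDerivedSeries br R n ⊔ leibnizKernel br) ((hD _).sup hK) ((hD _).sup hK)
        (fun x y => Submodule.mem_sup_right (Submodule.subset_span ⟨x, y, rfl⟩))
        (by
          intro a ha b hb
          obtain ⟨u, hu, v, hv, rfl⟩ := Submodule.mem_sup.1 ha
          obtain ⟨p, hp, q, hq, rfl⟩ := Submodule.mem_sup.1 hb
          rw [map_add, br_leibnizKernel hLeib _ hq, add_zero, map_add, LinearMap.add_apply]
          exact Submodule.add_mem_sup (Submodule.subset_span ⟨u, hu, p, hp, rfl⟩) (hK.1 _ hv _))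
        s hs2
      refine ⟨t, fun x => ?_, ht2⟩
      have h1 : t x - s x ∈ R :=
        sup_le (sup_le (hDR _) hKR) (sup_le (hDR _) hKR) (ht1 x)
      rw [← hmk, map_sub, hs1, sub_eq_zero] at h1
      exact h1
  obtain ⟨n, hn⟩ := hRS
  obtain ⟨s₀, hs1, hs2⟩ := chain n
  rw [hn, bot_sup_eq] at hs2
  obtain ⟨s, hss, hs⟩ := deform_leftTriv br hLeib (leibnizKernel br)
    (fun x a ha => (leibnizKernel_ideal hLeib).1 a ha x)
    (fun x a ha => br_leibnizKernel hLeib x ha) s₀ hs2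
  have hsec : ∀ x, R.mkQ (s x) = x := by
    intro x
    have h1 := hKR (hss x)
    rw [← hmk, map_sub, hs1, sub_eq_zero] at h1
    exact h1
  have hdisj : LinearMap.range s ⊓ R = ⊥ := by
    rw [eq_bot_iff]
    rintro _ ⟨⟨x, rfl⟩, hx⟩
    rw [SetLike.mem_coe, ← hmk, hsec] at hx
    simp [hx]
  have hsup : LinearMap.range s ⊔ R = ⊤ := by
    rw [eq_top_iff]
    intro x _
    have h1 : x - s (R.mkQ x) ∈ R := by rw [← hmk, map_sub, hsec, sub_self]
    have := Submodule.add_mem_sup (LinearMap.mem_range_self s (R.mkQ x)) h1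
    simpa using this
  refine ⟨LinearMap.range s, ?_, ?_, ?_, hdisj, hsup⟩
  · rintro _ ⟨x, rfl⟩ _ ⟨y, rfl⟩
    exact ⟨⁅x, y⁆, hs x y⟩
  · rintro _ ⟨x, rfl⟩ _ ⟨y, rfl⟩
    rw [← hs, ← hs, ← lie_skew, map_neg]
  · intro J hJS hJ ⟨m, hm⟩
    -- As `L = S + R`, the subspace `J + R` is a solvable ideal of `L`.
    have hle : J ⊔ R ≤ R := by
      refine hRmax _ ⟨fun a ha y => ?_, fun a ha y => ?_⟩ (solvable_of_lds_le ⟨n, hn⟩ m ?_)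
      · obtain ⟨j, hj, r, hr, rfl⟩ := Submodule.mem_sup.1 ha
        obtain ⟨u, hu, q, hq, rfl⟩ := Submodule.mem_sup.1 (hsup ▸ Submodule.mem_top : y ∈ _)
        have h2 : br r (u + q) + br j q ∈ R := R.add_mem (hRI.1 _ hr _) (hRI.2 _ hq _)
        have := Submodule.add_mem_sup (hJ j hj u hu).1 h2
        convert this using 1
        simp only [map_add, LinearMap.add_apply]
        abel
      · obtain ⟨j, hj, r, hr, rfl⟩ := Submodule.mem_sup.1 ha
        obtain ⟨u, hu, q, hq, rfl⟩ := Submodule.mem_sup.1 (hsup ▸ Submodule.mem_top : y ∈ _)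
        have h2 : br (u + q) r + br q j ∈ R := R.add_mem (hRI.2 _ hr _) (hRI.1 _ hq _)
        have := Submodule.add_mem_sup (hJ j hj u hu).2 h2
        convert this using 1
        simp only [map_add, LinearMap.add_apply]
        abel
      · refine (lds_sup_le hRI m).trans ?_
        rw [hm, bot_sup_eq]
    rw [eq_bot_iff, ← hdisj]
    exact le_inf hJS (le_sup_left.trans hle)
end
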